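/- Let φ(x) be a formula of the correspondence language that is invariant with respect to (2,2)-modal asimulations. Then φ(x) is logically equivalent to the (2,2)-standard x-translation of some modal intuitionistic formula. -/

import Mathlib

namespace ModalIntAsim

/-- Binary relation symbols of the correspondence vocabulary: R, R_□, R_◇. -/
inductive RelSym : Type
  | r | box | diam
deriving DecidableEq

/-- Formulas of the correspondence language: classical first-order logic without
identity, with variables indexed by `ℕ`, unary predicate letters `P n` (n : ℕ),
and the three binary relation symbols. -/
inductive FOForm : Type
  | falsum : FOForm
  | pred : ℕ → ℕ → FOForm            -- `pred n v` is `P_n(x_v)`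
  | rel : RelSym → ℕ → ℕ → FOForm    -- `rel s v w` is `S(x_v, x_w)`
  | conj : FOForm → FOForm → FOForm
  | disj : FOForm → FOForm → FOForm
  | impl : FOForm → FOForm → FOForm
  | all : ℕ → FOForm → FOForm
  | ex : ℕ → FOForm → FOForm

namespace FOForm

/-- Free variables of a correspondence formula. -/
def freeVars : FOForm → Finset ℕ
  | falsum => ∅
  | pred _ v => {v}
  | rel _ v w => {v, w}
  | conj f g => f.freeVars ∪ g.freeVars
  | disj f g => f.freeVars ∪ g.freeVars
  | impl f g => f.freeVars ∪ g.freeVars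
  | all v f => f.freeVars \ {v}
  | ex v f => f.freeVars \ {v}

/-- The unary predicate letters occurring in a formula (the binary relation
symbols R, R_□, R_◇ are regarded as belonging to every vocabulary Σ_φ). -/
def predLetters : FOForm → Finset ℕ
  | falsum => ∅
  | pred n _ => {n}
  | rel _ _ _ => ∅
  | conj f g => f.predLetters ∪ g.predLetters
  | disj f g => f.predLetters ∪ g.predLetters
  | impl f g => f.predLetters ∪ g.predLetters
  | all _ f => f.predLetters
  | ex _ f => f.predLetters

/-- Degree of a formula: the greatest number of nested quantifiers. -/
def degree : FOForm → ℕ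
  | falsum => 0
  | pred _ _ => 0
  | rel _ _ _ => 0
  | conj f g => max f.degree g.degree
  | disj f g => max f.degree g.degree
  | impl f g => max f.degree g.degree
  | all _ f => f.degree + 1
  | ex _ f => f.degree + 1

end FOForm

/-- A model of the correspondence language: a domain together with
interpretations of R, R_□, R_◇ and of the unary predicate letters.
(A Θ-model only consults the letters in Θ.) -/
structure Model : Type 1 where
  U : Type
  rel : U → U → Prop
  relBox : U → U → Prop
  relDiam : U → U → Prop
  pred : ℕ → U → Prop

/-- Interpretation of a binary relation symbol in a model. -/
def Model.relOf (M : Model) : RelSym → M.U → M.U → Prop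
  | .r => M.rel
  | .box => M.relBox
  | .diam => M.relDiam

/-- Tarskian satisfaction of a formula in a model under an assignment. -/
def Sat (M : Model) : FOForm → (ℕ → M.U) → Prop
  | .falsum, _ => False
  | .pred n v, α => M.pred n (α v)
  | .rel s v w, α => M.relOf s (α v) (α w)
  | .conj f g, α => Sat M f α ∧ Sat M g α
  | .disj f g, α => Sat M f α ∨ Sat M g α
  | .impl f g, α => Sat M f α → Sat M g α
  | .all v f, α => ∀ u : M.U, Sat M f (Function.update α v u)
  | .ex v f, α => ∃ u : M.U, Sat M f (Function.update α v u)

/-- `M, a ⊨ φ(x)`: φ is true in `M` under any assignment sending `x` to `a`. -/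
def SatAt (M : Model) (a : M.U) (x : ℕ) (φ : FOForm) : Prop :=
  ∀ α : ℕ → M.U, α x = a → Sat M φ α

/-- Logical equivalence of correspondence formulas. -/
def Equiv (φ ψ : FOForm) : Prop :=
  ∀ (M : Model) (α : ℕ → M.U), Sat M φ α ↔ Sat M ψ α

/-- Logical entailment between correspondence formulas. -/
def Entails (φ ψ : FOForm) : Prop :=
  ∀ (M : Model) (α : ℕ → M.U), Sat M φ α → Sat M ψ α

/-- Modal intuitionistic formulas: built from propositional letters `p n`
using ⊥, ∧, ∨, →, □, ◇. -/
inductive MForm : Type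
  | bot : MForm
  | prop : ℕ → MForm
  | conj : MForm → MForm → MForm
  | disj : MForm → MForm → MForm
  | impl : MForm → MForm → MForm
  | box : MForm → MForm
  | diam : MForm → MForm

/-- The (i,j)-standard x-translation `ST_ij`.  `boxOne = true` means the box
clause (□₁) is used (i = 1), `boxOne = false` means (□₂) (i = 2); likewise
`diamOne = true` means the diamond clause (◇₁) (j = 1) and `diamOne = false`
means (◇₂) (j = 2).  Bound variables are chosen fresh as `x+1`, `x+2`. -/
def ST (boxOne diamOne : Bool) : MForm → ℕ → FOForm
  | .bot, _ => .falsum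
  | .prop n, x => .pred n x
  | .conj I J, x => .conj (ST boxOne diamOne I x) (ST boxOne diamOne J x)
  | .disj I J, x => .disj (ST boxOne diamOne I x) (ST boxOne diamOne J x)
  | .impl I J, x =>
      .all (x + 1) (.impl (.rel .r x (x + 1))
        (.impl (ST boxOne diamOne I (x + 1)) (ST boxOne diamOne J (x + 1))))
  | .box I, x =>
      if boxOne then
        .all (x + 1) (.impl (.rel .box x (x + 1)) (ST boxOne diamOne I (x + 1)))
      else
        .all (x + 1) (.impl (.rel .r x (x + 1))
          (.all (x + 2) (.impl (.rel .box (x + 1) (x + 2)) (ST boxOne diamOne I (x + 2)))))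
  | .diam I, x =>
      if diamOne then
        .ex (x + 1) (.conj (.rel .diam x (x + 1)) (ST boxOne diamOne I (x + 1)))
      else
        .all (x + 1) (.impl (.rel .r x (x + 1))
          (.ex (x + 2) (.conj (.rel .diam (x + 1) (x + 2)) (ST boxOne diamOne I (x + 2)))))

/-! ### Conditions on relations between tuples (the k-asimulation conditions).
A relation between the two models is represented by its two directed
components; `N` is the model of the source tuple and `P` that of the target
tuple.  A tuple `(ā_m, a)` is represented as the list `as ++ [a]`, with
`m = as.length`. -/

section TupleConds

variable (N P : Model)

/-- The "p-type" condition: related tuples are nonempty and of equal length. -/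
def TypeCond (A : List N.U → List P.U → Prop) : Prop :=
  ∀ as bs, A as bs → as ≠ [] ∧ as.length = bs.length

/-- (p-base). -/
def BaseCond (Θ : Set ℕ) (A : List N.U → List P.U → Prop) : Prop :=
  ∀ (as : List N.U) (bs : List P.U) (a : N.U) (b : P.U),
    A (as ++ [a]) (bs ++ [b]) → ∀ n ∈ Θ, N.pred n a → P.pred n b

/-- (p-step). -/
def StepCond (k : ℕ) (A : List N.U → List P.U → Prop)
    (Arev : List P.U → List N.U → Prop) : Prop :=
  ∀ (as : List N.U) (bs : List P.U) (a : N.U) (b d : P.U),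
    A (as ++ [a]) (bs ++ [b]) → P.rel b d → as.length < k →
    ∃ c : N.U, N.rel a c ∧ A (as ++ [a, c]) (bs ++ [b, d]) ∧
      Arev (bs ++ [b, d]) (as ++ [a, c])

/-- (p-box-1). -/
def Box1Cond (k : ℕ) (A : List N.U → List P.U → Prop) : Prop :=
  ∀ (as : List N.U) (bs : List P.U) (a : N.U) (b d : P.U),
    A (as ++ [a]) (bs ++ [b]) → P.relBox b d → as.length < k →
    ∃ c : N.U, N.relBox a c ∧ A (as ++ [a, c]) (bs ++ [b, d])

/-- (p-box-2). -/
def Box2Cond (k : ℕ) (A : List N.U → List P.U → Prop) : Prop :=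
  ∀ (as : List N.U) (bs : List P.U) (a : N.U) (b d f : P.U),
    A (as ++ [a]) (bs ++ [b]) → P.rel b d → P.relBox d f → as.length + 1 < k →
    ∃ c e : N.U, N.rel a c ∧ N.relBox c e ∧ A (as ++ [a, c, e]) (bs ++ [b, d, f])

/-- (p-diam-1). -/
def Diam1Cond (k : ℕ) (A : List N.U → List P.U → Prop) : Prop :=
  ∀ (as : List N.U) (bs : List P.U) (a c : N.U) (b : P.U),
    A (as ++ [a]) (bs ++ [b]) → N.relDiam a c → as.length < k →
    ∃ d : P.U, P.relDiam b d ∧ A (as ++ [a, c]) (bs ++ [b, d])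

/-- (p-diam-2(1)). -/
def Diam2aCond (k : ℕ) (A B : List N.U → List P.U → Prop) : Prop :=
  ∀ (as : List N.U) (bs : List P.U) (a : N.U) (b d : P.U),
    A (as ++ [a]) (bs ++ [b]) → P.rel b d → as.length + 1 < k →
    ∃ c : N.U, N.rel a c ∧ B (as ++ [a, c]) (bs ++ [b, d])

/-- (p-diam-2(2)). -/
def Diam2bCond (k : ℕ) (B A : List N.U → List P.U → Prop) : Prop :=
  ∀ (as : List N.U) (bs : List P.U) (a c : N.U) (b : P.U),
    B (as ++ [a]) (bs ++ [b]) → N.relDiam a c → as.length < k →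
    ∃ d : P.U, P.relDiam b d ∧ A (as ++ [a, c]) (bs ++ [b, d])

end TupleConds

/-- An (i,1)-modal ⟨(M₁,t),(M₂,u)⟩_k-asimulation (j = 1): a single relation `A`
given by its two directed components `A12`, `A21`. -/
def IsKAsimD1 (boxOne : Bool) (Θ : Set ℕ) (M₁ M₂ : Model) (t : M₁.U) (u : M₂.U) (k : ℕ)
    (A12 : List M₁.U → List M₂.U → Prop) (A21 : List M₂.U → List M₁.U → Prop) : Prop :=
  TypeCond M₁ M₂ A12 ∧ TypeCond M₂ M₁ A21 ∧
  A12 [t] [u] ∧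
  BaseCond M₁ M₂ Θ A12 ∧ BaseCond M₂ M₁ Θ A21 ∧
  StepCond M₁ M₂ k A12 A21 ∧ StepCond M₂ M₁ k A21 A12 ∧
  (if boxOne then Box1Cond M₁ M₂ k A12 ∧ Box1Cond M₂ M₁ k A21
   else Box2Cond M₁ M₂ k A12 ∧ Box2Cond M₂ M₁ k A21) ∧
  Diam1Cond M₁ M₂ k A12 ∧ Diam1Cond M₂ M₁ k A21

/-- An (i,2)-modal ⟨(M₁,t),(M₂,u)⟩_k-asimulation (j = 2): an ordered pair
(A, B) of relations, each given by its two directed components. -/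
def IsKAsimD2 (boxOne : Bool) (Θ : Set ℕ) (M₁ M₂ : Model) (t : M₁.U) (u : M₂.U) (k : ℕ)
    (A12 : List M₁.U → List M₂.U → Prop) (A21 : List M₂.U → List M₁.U → Prop)
    (B12 : List M₁.U → List M₂.U → Prop) (B21 : List M₂.U → List M₁.U → Prop) : Prop :=
  TypeCond M₁ M₂ A12 ∧ TypeCond M₂ M₁ A21 ∧
  TypeCond M₁ M₂ B12 ∧ TypeCond M₂ M₁ B21 ∧
  A12 [t] [u] ∧
  BaseCond M₁ M₂ Θ A12 ∧ BaseCond M₂ M₁ Θ A21 ∧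
  StepCond M₁ M₂ k A12 A21 ∧ StepCond M₂ M₁ k A21 A12 ∧
  (if boxOne then Box1Cond M₁ M₂ k A12 ∧ Box1Cond M₂ M₁ k A21
   else Box2Cond M₁ M₂ k A12 ∧ Box2Cond M₂ M₁ k A21) ∧
  Diam2aCond M₁ M₂ k A12 B12 ∧ Diam2aCond M₂ M₁ k A21 B21 ∧
  Diam2bCond M₁ M₂ k B12 A12 ∧ Diam2bCond M₂ M₁ k B21 A21

/-- φ(x) is invariant with respect to (i,1)-modal k-asimulations. -/
def KInvariantD1 (boxOne : Bool) (x : ℕ) (φ : FOForm) (k : ℕ) : Prop :=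
  ∀ Θ : Set ℕ, (φ.predLetters : Set ℕ) ⊆ Θ →
  ∀ (M₁ M₂ : Model) (t : M₁.U) (u : M₂.U)
    (A12 : List M₁.U → List M₂.U → Prop) (A21 : List M₂.U → List M₁.U → Prop),
    IsKAsimD1 boxOne Θ M₁ M₂ t u k A12 A21 →
    ∀ (a : M₁.U) (b : M₂.U), A12 [a] [b] → SatAt M₁ a x φ → SatAt M₂ b x φ

/-- φ(x) is invariant with respect to (i,2)-modal k-asimulations. -/
def KInvariantD2 (boxOne : Bool) (x : ℕ) (φ : FOForm) (k : ℕ) : Prop :=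
  ∀ Θ : Set ℕ, (φ.predLetters : Set ℕ) ⊆ Θ →
  ∀ (M₁ M₂ : Model) (t : M₁.U) (u : M₂.U)
    (A12 : List M₁.U → List M₂.U → Prop) (A21 : List M₂.U → List M₁.U → Prop)
    (B12 : List M₁.U → List M₂.U → Prop) (B21 : List M₂.U → List M₁.U → Prop),
    IsKAsimD2 boxOne Θ M₁ M₂ t u k A12 A21 B12 B21 →
    ∀ (a : M₁.U) (b : M₂.U), A12 [a] [b] → SatAt M₁ a x φ → SatAt M₂ b x φ

/-! ### Conditions for asimulations *simpliciter* (relations between elements). -/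

section ElemConds

variable (N P : Model)

/-- (base). -/
def BaseCondE (Θ : Set ℕ) (A : N.U → P.U → Prop) : Prop :=
  ∀ (a : N.U) (b : P.U), A a b → ∀ n ∈ Θ, N.pred n a → P.pred n b

/-- (step). -/
def StepCondE (A : N.U → P.U → Prop) (Arev : P.U → N.U → Prop) : Prop :=
  ∀ (a : N.U) (b d : P.U), A a b → P.rel b d →
    ∃ c : N.U, N.rel a c ∧ A c d ∧ Arev d c

/-- (box-1). -/
def Box1CondE (A : N.U → P.U → Prop) : Prop :=
  ∀ (a : N.U) (b d : P.U), A a b → P.relBox b d →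
    ∃ c : N.U, N.relBox a c ∧ A c d

/-- (box-2). -/
def Box2CondE (A : N.U → P.U → Prop) : Prop :=
  ∀ (a : N.U) (b d f : P.U), A a b → P.rel b d → P.relBox d f →
    ∃ c e : N.U, N.rel a c ∧ N.relBox c e ∧ A e f

/-- (diam-1). -/
def Diam1CondE (A : N.U → P.U → Prop) : Prop :=
  ∀ (a c : N.U) (b : P.U), A a b → N.relDiam a c →
    ∃ d : P.U, P.relDiam b d ∧ A c d

/-- (diam-2(1)). -/
def Diam2aCondE (A B : N.U → P.U → Prop) : Prop :=
  ∀ (a : N.U) (b d : P.U), A a b → P.rel b d →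
    ∃ c : N.U, N.rel a c ∧ B c d

/-- (diam-2(2)). -/
def Diam2bCondE (B A : N.U → P.U → Prop) : Prop :=
  ∀ (a c : N.U) (b : P.U), B a b → N.relDiam a c →
    ∃ d : P.U, P.relDiam b d ∧ A c d

end ElemConds

/-- An (i,1)-modal ⟨(M₁,t),(M₂,u)⟩-asimulation (j = 1). -/
def IsAsimD1 (boxOne : Bool) (Θ : Set ℕ) (M₁ M₂ : Model) (t : M₁.U) (u : M₂.U)
    (A12 : M₁.U → M₂.U → Prop) (A21 : M₂.U → M₁.U → Prop) : Prop :=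
  A12 t u ∧
  BaseCondE M₁ M₂ Θ A12 ∧ BaseCondE M₂ M₁ Θ A21 ∧
  StepCondE M₁ M₂ A12 A21 ∧ StepCondE M₂ M₁ A21 A12 ∧
  (if boxOne then Box1CondE M₁ M₂ A12 ∧ Box1CondE M₂ M₁ A21
   else Box2CondE M₁ M₂ A12 ∧ Box2CondE M₂ M₁ A21) ∧
  Diam1CondE M₁ M₂ A12 ∧ Diam1CondE M₂ M₁ A21

/-- An (i,2)-modal ⟨(M₁,t),(M₂,u)⟩-asimulation (j = 2). -/
def IsAsimD2 (boxOne : Bool) (Θ : Set ℕ) (M₁ M₂ : Model) (t : M₁.U) (u : M₂.U)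
    (A12 : M₁.U → M₂.U → Prop) (A21 : M₂.U → M₁.U → Prop)
    (B12 : M₁.U → M₂.U → Prop) (B21 : M₂.U → M₁.U → Prop) : Prop :=
  A12 t u ∧
  BaseCondE M₁ M₂ Θ A12 ∧ BaseCondE M₂ M₁ Θ A21 ∧
  StepCondE M₁ M₂ A12 A21 ∧ StepCondE M₂ M₁ A21 A12 ∧
  (if boxOne then Box1CondE M₁ M₂ A12 ∧ Box1CondE M₂ M₁ A21
   else Box2CondE M₁ M₂ A12 ∧ Box2CondE M₂ M₁ A21) ∧
  Diam2aCondE M₁ M₂ A12 B12 ∧ Diam2aCondE M₂ M₁ A21 B21 ∧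
  Diam2bCondE M₁ M₂ B12 A12 ∧ Diam2bCondE M₂ M₁ B21 A21

/-- φ(x) is invariant with respect to (i,1)-modal asimulations. -/
def InvariantD1 (boxOne : Bool) (x : ℕ) (φ : FOForm) : Prop :=
  ∀ Θ : Set ℕ, (φ.predLetters : Set ℕ) ⊆ Θ →
  ∀ (M₁ M₂ : Model) (t : M₁.U) (u : M₂.U)
    (A12 : M₁.U → M₂.U → Prop) (A21 : M₂.U → M₁.U → Prop),
    IsAsimD1 boxOne Θ M₁ M₂ t u A12 A21 →
    ∀ (a : M₁.U) (b : M₂.U), A12 a b → SatAt M₁ a x φ → SatAt M₂ b x φ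

/-- φ(x) is invariant with respect to (i,2)-modal asimulations. -/
def InvariantD2 (boxOne : Bool) (x : ℕ) (φ : FOForm) : Prop :=
  ∀ Θ : Set ℕ, (φ.predLetters : Set ℕ) ⊆ Θ →
  ∀ (M₁ M₂ : Model) (t : M₁.U) (u : M₂.U)
    (A12 : M₁.U → M₂.U → Prop) (A21 : M₂.U → M₁.U → Prop)
    (B12 : M₁.U → M₂.U → Prop) (B21 : M₂.U → M₁.U → Prop),
    IsAsimD2 boxOne Θ M₁ M₂ t u A12 A21 B12 B21 →
    ∀ (a : M₁.U) (b : M₂.U), A12 a b → SatAt M₁ a x φ → SatAt M₂ b x φ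

/-! ### Types, complete conjunctions, ω-saturation. -/

/-- `int(φ,x,l)`: the set of (2,2)-standard x-translations of modal
intuitionistic formulas which are (Σ_φ,x,l)-formulas. -/
def intSet (φ : FOForm) (x l : ℕ) : Set FOForm :=
  {ψ | (∃ I : MForm, ψ = ST false false I x) ∧
    ψ.predLetters ⊆ φ.predLetters ∧ ψ.freeVars ⊆ {x} ∧ ψ.degree ≤ l}

/-- `tp_l(φ(x),M,a)`. -/
def tpSet (φ : FOForm) (x l : ℕ) (M : Model) (a : M.U) : Set FOForm :=
  {ψ | ψ ∈ intSet φ x l ∧ SatAt M a x ψ}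

/-- Conjunction of a nonempty list of formulas. -/
def listConj : FOForm → List FOForm → FOForm
  | ψ, [] => ψ
  | ψ, χ :: L => FOForm.conj ψ (listConj χ L)

/-- Ψ(x) is a complete (φ,x,k)-conjunction. -/
def IsCompleteConj (φ : FOForm) (x k : ℕ) (Ψ : FOForm) : Prop :=
  (∃ (ψ₀ : FOForm) (L : List FOForm), ψ₀ ∈ intSet φ x k ∧
    (∀ χ ∈ L, χ ∈ intSet φ x k) ∧ Ψ = listConj ψ₀ L) ∧
  ∃ (M : Model) (a : M.U), SatAt M a x (FOForm.conj Ψ φ) ∧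
    ∀ ψ ∈ tpSet φ x k M a, Entails Ψ ψ

/-- `int_x(Θ)` for the (i,j)-standard translation. -/
def intX (Θ : Set ℕ) (boxOne diamOne : Bool) (x : ℕ) : Set FOForm :=
  {ψ | (∃ I : MForm, ψ = ST boxOne diamOne I x) ∧ (ψ.predLetters : Set ℕ) ⊆ Θ}

/-- `tp_x(M,t)` for the (i,j)-standard translation. -/
def tpX (Θ : Set ℕ) (boxOne diamOne : Bool) (x : ℕ) (M : Model) (t : M.U) : Set FOForm :=
  {ψ | ψ ∈ intX Θ boxOne diamOne x ∧ SatAt M t x ψ}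

/-- `imp_x(M,t) = ⋂ { t̄p_x(M,u) : t R_◇ u }` (for the (2,2)-translation). -/
def impX (Θ : Set ℕ) (x : ℕ) (M : Model) (t : M.U) : Set FOForm :=
  {ψ | ψ ∈ intX Θ false false x ∧ ∀ u : M.U, M.relDiam t u → ¬ SatAt M u x ψ}

/-- ω-saturation: for every finite tuple of parameters (the first `n` values of
an assignment `α`) and every set `Γ` of formulas with finitely many free
variables beyond the parameters, if `Γ` is consistent with the first-order
theory of `[M,ā]` (i.e. satisfiable together with it in some model), then `Γ`
is realized in `[M,ā]`. -/
def OmegaSaturated (M : Model) : Prop :=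
  ∀ (n : ℕ) (α : ℕ → M.U) (Γ : Set FOForm),
    (∃ k : ℕ, ∀ γ ∈ Γ, γ.freeVars ⊆ Finset.range (n + k)) →
    (∃ (N : Model) (β : ℕ → N.U),
      (∀ ψ : FOForm, ψ.freeVars ⊆ Finset.range n → Sat M ψ α → Sat N ψ β) ∧
      ∀ γ ∈ Γ, Sat N γ β) →
    ∃ α' : ℕ → M.U, (∀ i < n, α' i = α i) ∧ ∀ γ ∈ Γ, Sat M γ α'

/-! ### Relativization to a class κ of models. -/

/-- κ(Θ) is first-order axiomatizable for every finite Θ (with R ∈ Θ): for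
every finite set `S` of unary predicate letters there is a set of Θ-sentences
axiomatizing membership in κ. -/
def FinAxiomatizable (κ : Set Model) : Prop :=
  ∀ S : Finset ℕ, ∃ Ax : Set FOForm,
    (∀ ψ ∈ Ax, ψ.freeVars = ∅ ∧ (ψ.predLetters : Set ℕ) ⊆ (S : Set ℕ)) ∧
    ∀ M : Model, M ∈ κ ↔ ∀ ψ ∈ Ax, ∀ α : ℕ → M.U, Sat M ψ α

/-- φ κ-follows from ψ: {ψ, ¬φ} is not κ-satisfiable. -/
def KappaFollows (κ : Set Model) (ψ φ : FOForm) : Prop :=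
  ¬ ∃ M : Model, M ∈ κ ∧ ∃ α : ℕ → M.U, Sat M ψ α ∧ ¬ Sat M φ α

/-- κ-equivalence of formulas. -/
def KappaEquiv (κ : Set Model) (φ ψ : FOForm) : Prop :=
  KappaFollows κ φ ψ ∧ KappaFollows κ ψ φ

/-- φ(x) is κ-invariant with respect to (i,1)-modal asimulations. -/
def KappaInvariantD1 (κ : Set Model) (boxOne : Bool) (x : ℕ) (φ : FOForm) : Prop :=
  ∀ Θ : Set ℕ, (φ.predLetters : Set ℕ) ⊆ Θ →
  ∀ (M₁ M₂ : Model), M₁ ∈ κ → M₂ ∈ κ →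
  ∀ (t : M₁.U) (u : M₂.U)
    (A12 : M₁.U → M₂.U → Prop) (A21 : M₂.U → M₁.U → Prop),
    IsAsimD1 boxOne Θ M₁ M₂ t u A12 A21 →
    ∀ (a : M₁.U) (b : M₂.U), A12 a b → SatAt M₁ a x φ → SatAt M₂ b x φ

/-- φ(x) is κ-invariant with respect to (i,2)-modal asimulations. -/
def KappaInvariantD2 (κ : Set Model) (boxOne : Bool) (x : ℕ) (φ : FOForm) : Prop :=
  ∀ Θ : Set ℕ, (φ.predLetters : Set ℕ) ⊆ Θ →
  ∀ (M₁ M₂ : Model), M₁ ∈ κ → M₂ ∈ κ →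
  ∀ (t : M₁.U) (u : M₂.U)
    (A12 : M₁.U → M₂.U → Prop) (A21 : M₂.U → M₁.U → Prop)
    (B12 : M₁.U → M₂.U → Prop) (B21 : M₂.U → M₁.U → Prop),
    IsAsimD2 boxOne Θ M₁ M₂ t u A12 A21 B12 B21 →
    ∀ (a : M₁.U) (b : M₂.U), A12 a b → SatAt M₁ a x φ → SatAt M₂ b x φ

/-- φ(x) is κ-invariant with respect to (i,j)-modal asimulations
(`diamOne = true` means j = 1). -/
def KappaInvariant (κ : Set Model) (boxOne diamOne : Bool) (x : ℕ) (φ : FOForm) : Prop :=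
  if diamOne then KappaInvariantD1 κ boxOne x φ else KappaInvariantD2 κ boxOne x φ


/-!
Call the set of modal intuitionistic formulas forced at a point its type. Inclusion of types,
together with inclusion of the sets of formulas forced at some `R_◇`-successor, is an asimulation
between countably saturated models: each back-and-forth condition asks for a point satisfying
countably many first-order requirements, and any finitely many of them are packed into a single
modal formula that the smaller type fails to contain. Hence an invariant `φ` is preserved by
inclusion of types between saturated models. Were no finite set of modal formulas enough to
guarantee this preservation, an ultraproduct over `ℕ` of the counterexamples would be a saturated
counterexample to it. So some finite set `F` suffices, and `φ` is then equivalent to the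
disjunction of the conjunctions of those subsets of `F` that can be the trace on `F` of a type
realizing `φ`.
-/

/-! ### Kripke semantics -/

/-- Forcing of a modal intuitionistic formula at a point of a model, with the clauses (□₂) and
(◇₂): the semantics expressed by the (2,2)-standard translation. -/
def Forces (M : Model) : M.U → MForm → Prop
  | _, .bot => False
  | a, .prop n => M.pred n a
  | a, .conj I J => Forces M a I ∧ Forces M a J
  | a, .disj I J => Forces M a I ∨ Forces M a J
  | a, .impl I J => ∀ b, M.rel a b → Forces M b I → Forces M b J
  | a, .box I => ∀ b, M.rel a b → ∀ c, M.relBox b c → Forces M c I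
  | a, .diam I => ∀ b, M.rel a b → ∃ c, M.relDiam b c ∧ Forces M c I

theorem sat_ST_iff_forces {M : Model} (I : MForm) (x : ℕ) (α : ℕ → M.U) :
    Sat M (ST false false I x) α ↔ Forces M (α x) I := by
  induction I generalizing x α <;> simp_all [ST, Sat, Forces, Model.relOf]

namespace MForm

/-- A Gödel numbering of modal formulas, which shows that there are only countably many. -/
def code : MForm → ℕ
  | bot => Nat.pair 0 0
  | prop n => Nat.pair 1 n
  | conj I J => Nat.pair 2 (Nat.pair I.code J.code)
  | disj I J => Nat.pair 3 (Nat.pair I.code J.code)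
  | impl I J => Nat.pair 4 (Nat.pair I.code J.code)
  | box I => Nat.pair 5 I.code
  | diam I => Nat.pair 6 I.code

theorem code_injective : Function.Injective code := by
  intro I J h
  induction I generalizing J <;> cases J <;> grind [code, Nat.pair_eq_pair]

instance : Countable MForm := code_injective.countable

/-- The conjunction of a finite set of modal formulas, with `⊥ → ⊥` as the empty conjunction. -/
noncomputable def bigConj (F : Finset MForm) : MForm :=
  F.toList.foldr conj (impl bot bot)

/-- The disjunction of a finite set of modal formulas. -/
noncomputable def bigDisj (F : Finset MForm) : MForm :=
  F.toList.foldr disj bot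

end MForm

theorem forces_bigConj {M : Model} {a : M.U} {F : Finset MForm} :
    Forces M a (.bigConj F) ↔ ∀ I ∈ F, Forces M a I := by
  simp only [MForm.bigConj, ← Finset.mem_toList]
  induction F.toList <;> simp_all [Forces]

theorem forces_bigDisj {M : Model} {a : M.U} {F : Finset MForm} :
    Forces M a (.bigDisj F) ↔ ∃ I ∈ F, Forces M a I := by
  simp only [MForm.bigDisj, ← Finset.mem_toList]
  induction F.toList <;> simp_all [Forces]

/-! ### Inclusion of types -/

/-- `Possibly M a I`: some `R_◇`-successor of `a` forces `I`. The formulas that are not possible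
at `a` are those of the set `imp_x(M,a)`. -/
def Possibly (M : Model) (a : M.U) (I : MForm) : Prop :=
  ∃ c, M.relDiam a c ∧ Forces M c I

/-- Inclusion of modal types, the first component of the canonical asimulation. -/
def TypeLE (N P : Model) (a : N.U) (b : P.U) : Prop :=
  ∀ I, Forces N a I → Forces P b I

/-- Inclusion of the sets of possible formulas, the second component of the canonical
asimulation. -/
def PossLE (N P : Model) (a : N.U) (b : P.U) : Prop :=
  ∀ I, Possibly N a I → Possibly P b I

section FiniteApproximation

variable {N P : Model} {a : N.U} {b d : P.U}

theorem TypeLE.exists_rel_forces_iff (hab : TypeLE N P a b) (hbd : P.rel b d)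
    (F : Finset MForm) : ∃ c, N.rel a c ∧ ∀ I ∈ F, (Forces N c I ↔ Forces P d I) := by
  classical
  let I := MForm.bigConj {J ∈ F | Forces P d J}
  let J := MForm.bigDisj {J ∈ F | ¬ Forces P d J}
  have hb : ¬ Forces P b (.impl I J) := fun hb => by
    obtain ⟨K, hK, hdK⟩ := forces_bigDisj.1 (hb d hbd (forces_bigConj.2 (by simp)))
    exact (Finset.mem_filter.1 hK).2 hdK
  have ha : ¬ Forces N a (.impl I J) := mt (hab _) hb
  simp only [Forces, not_forall, I, J, forces_bigConj, forces_bigDisj] at ha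
  obtain ⟨c, hac, hpos, hneg⟩ := ha
  exact ⟨c, hac, by grind⟩

theorem TypeLE.exists_rel_relBox_not_forces {f : P.U} (hab : TypeLE N P a b) (hbd : P.rel b d)
    (hdf : P.relBox d f) (F : Finset MForm) (hF : ∀ I ∈ F, ¬ Forces P f I) :
    ∃ c e, N.rel a c ∧ N.relBox c e ∧ ∀ I ∈ F, ¬ Forces N e I := by
  have hb : ¬ Forces P b (.box (.bigDisj F)) := fun hb => by
    obtain ⟨I, hI, hf⟩ := forces_bigDisj.1 (hb d hbd f hdf)
    exact hF I hI hf
  have ha := mt (hab _) hb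
  simp only [Forces, not_forall, forces_bigDisj, not_exists, not_and] at ha
  obtain ⟨c, hac, e, hce, he⟩ := ha
  exact ⟨c, e, hac, hce, he⟩

theorem TypeLE.exists_rel_not_possibly (hab : TypeLE N P a b) (hbd : P.rel b d)
    (F : Finset MForm) (hF : ∀ I ∈ F, ¬ Possibly P d I) :
    ∃ c, N.rel a c ∧ ∀ I ∈ F, ¬ Possibly N c I := by
  have hb : ¬ Forces P b (.diam (.bigDisj F)) := fun hb => by
    obtain ⟨z, hdz, hz⟩ := hb d hbd
    obtain ⟨I, hI, hzI⟩ := forces_bigDisj.1 hz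
    exact hF I hI ⟨z, hdz, hzI⟩
  have ha := mt (hab _) hb
  simp only [Forces, not_forall, forces_bigDisj] at ha
  obtain ⟨c, hac, hc⟩ := ha
  exact ⟨c, hac, fun I hI ⟨z, hcz, hz⟩ => hc ⟨z, hcz, I, hI, hz⟩⟩

theorem PossLE.exists_relDiam_forces {c : N.U} (hab : PossLE N P a b) (hac : N.relDiam a c)
    (F : Finset MForm) (hF : ∀ I ∈ F, Forces N c I) :
    ∃ d, P.relDiam b d ∧ ∀ I ∈ F, Forces P d I := by
  obtain ⟨d, hbd, hd⟩ := hab (.bigConj F) ⟨c, hac, forces_bigConj.2 hF⟩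
  exact ⟨d, hbd, forces_bigConj.1 hd⟩

end FiniteApproximation

/-! ### Saturated models -/

/-- A model is countably saturated if every countable set `Γ` of first-order formulas that is
finitely satisfiable in it, for fixed values of the variables in `V`, is satisfiable in it for the
same values of these variables. -/
def CountablySaturated (M : Model) : Prop :=
  ∀ (V : Set ℕ) (α : ℕ → M.U) (Γ : Set FOForm), Γ.Countable →
    (∀ G : Finset FOForm, (G : Set FOForm) ⊆ Γ →
      ∃ β : ℕ → M.U, Set.EqOn β α V ∧ ∀ γ ∈ G, Sat M γ β) →
    ∃ β : ℕ → M.U, Set.EqOn β α V ∧ ∀ γ ∈ Γ, Sat M γ β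

theorem CountablySaturated.exists_sat_family {M : Model} (hM : CountablySaturated M) {ι : Type*}
    [Countable ι] (V : Set ℕ) (α : ℕ → M.U) (ρ : FOForm) (χ : ι → FOForm) (s : Set ι)
    (h : ∀ F : Finset ι, (F : Set ι) ⊆ s →
      ∃ β : ℕ → M.U, Set.EqOn β α V ∧ Sat M ρ β ∧ ∀ i ∈ F, Sat M (χ i) β) :
    ∃ β : ℕ → M.U, Set.EqOn β α V ∧ Sat M ρ β ∧ ∀ i ∈ s, Sat M (χ i) β := by
  classical
  obtain ⟨β, hβα, hβ⟩ := hM V α (insert ρ (χ '' s)) (s.to_countable.image χ |>.insert ρ) <| by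
    intro G hG
    obtain ⟨F, hFs, hFG⟩ : ∃ F : Finset ι, (F : Set ι) ⊆ s ∧ F.image χ = G.erase ρ :=
      Finset.subset_set_image_iff.1 (by simpa [Set.sdiff_singleton_subset_iff] using hG)
    obtain ⟨β, hβα, hρ, hF⟩ := h F hFs
    have hG' : ∀ γ ∈ G.erase ρ, Sat M γ β := hFG ▸ Finset.forall_mem_image.2 hF
    refine ⟨β, hβα, fun γ hγ => ?_⟩
    rcases eq_or_ne γ ρ with rfl | hne
    · exact hρ
    · exact hG' γ (Finset.mem_erase.2 ⟨hne, hγ⟩)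
  exact ⟨β, hβα, hβ ρ (Set.mem_insert _ _), fun i hi =>
    hβ _ (Set.mem_insert_of_mem _ (Set.mem_image_of_mem χ hi))⟩

section Asimulation

variable {N P : Model}

theorem baseCondE_typeLE (Θ : Set ℕ) : BaseCondE N P Θ (TypeLE N P) :=
  fun _ _ hab n _ => hab (.prop n)

theorem stepCondE_typeLE (hN : CountablySaturated N) :
    StepCondE N P (TypeLE N P) (TypeLE P N) := by
  classical
  intro a b d hab hbd
  let literal (I : MForm) : FOForm :=
    if Forces P d I then ST false false I 1 else .impl (ST false false I 1) .falsum
  have sat_literal (I : MForm) (β : ℕ → N.U) :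
      Sat N (literal I) β ↔ (Forces N (β 1) I ↔ Forces P d I) := by
    by_cases hI : Forces P d I <;> simp [literal, hI, Sat, sat_ST_iff_forces]
  obtain ⟨β, hβa, hac, hc⟩ := hN.exists_sat_family {0} (fun _ => a) (.rel .r 0 1) literal
    .univ <| by
      intro F _
      obtain ⟨c, hac, hc⟩ := hab.exists_rel_forces_iff hbd F
      exact ⟨fun | 0 => a | _ => c, by simp, hac, fun I hI => (sat_literal I _).2 (hc I hI)⟩
  have hβ0 : β 0 = a := hβa rfl
  have hc_iff I := (sat_literal I β).1 (hc I trivial)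
  exact ⟨β 1, hβ0 ▸ hac, fun I => (hc_iff I).1, fun I => (hc_iff I).2⟩

theorem box2CondE_typeLE (hN : CountablySaturated N) : Box2CondE N P (TypeLE N P) := by
  intro a b d f hab hbd hdf
  obtain ⟨β, hβa, ⟨hac, hce⟩, he⟩ := hN.exists_sat_family {0} (fun _ => a)
    (.conj (.rel .r 0 1) (.rel .box 1 2)) (fun I => .impl (ST false false I 2) .falsum)
    {I | ¬ Forces P f I} <| by
      intro F hF
      obtain ⟨c, e, hac, hce, he⟩ := hab.exists_rel_relBox_not_forces hbd hdf F hF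
      refine ⟨fun | 0 => a | 1 => c | _ => e, by simp, ⟨hac, hce⟩, fun I hI => ?_⟩
      simpa [Sat, sat_ST_iff_forces] using he I hI
  have hβ0 : β 0 = a := hβa rfl
  simp only [Sat, sat_ST_iff_forces] at he
  exact ⟨β 1, β 2, hβ0 ▸ hac, hce, fun I => not_imp_not.1 (he I)⟩

theorem diam2aCondE_typeLE (hN : CountablySaturated N) :
    Diam2aCondE N P (TypeLE N P) (PossLE N P) := by
  intro a b d hab hbd
  let impossible (I : MForm) : FOForm :=
    .all 2 (.impl (.rel .diam 1 2) (.impl (ST false false I 2) .falsum))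
  have sat_impossible (I : MForm) (β : ℕ → N.U) :
      Sat N (impossible I) β ↔ ¬ Possibly N (β 1) I := by
    simp [impossible, Sat, sat_ST_iff_forces, Possibly, Model.relOf]
  obtain ⟨β, hβa, hac, hc⟩ := hN.exists_sat_family {0} (fun _ => a) (.rel .r 0 1) impossible
    {I | ¬ Possibly P d I} <| by
      intro F hF
      obtain ⟨c, hac, hc⟩ := hab.exists_rel_not_possibly hbd F hF
      exact ⟨fun | 0 => a | _ => c, by simp, hac, fun I hI => (sat_impossible I _).2 (hc I hI)⟩
  have hβ0 : β 0 = a := hβa rfl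
  exact ⟨β 1, hβ0 ▸ hac, fun I => not_imp_not.1 fun hI => (sat_impossible I β).1 (hc I hI)⟩

theorem diam2bCondE_possLE (hP : CountablySaturated P) :
    Diam2bCondE N P (PossLE N P) (TypeLE N P) := by
  intro a c b hab hac
  obtain ⟨β, hβb, hbd, hd⟩ := hP.exists_sat_family {0} (fun _ => b) (.rel .diam 0 1)
    (fun I => ST false false I 1) {I | Forces N c I} <| by
      intro F hF
      obtain ⟨d, hbd, hd⟩ := hab.exists_relDiam_forces hac F hF
      exact ⟨fun | 0 => b | _ => d, by simp, hbd, fun I hI => (sat_ST_iff_forces I 1 _).2 (hd I hI)⟩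
  have hβ0 : β 0 = b := hβb rfl
  exact ⟨β 1, hβ0 ▸ hbd, fun I hI => (sat_ST_iff_forces I 1 β).1 (hd I hI)⟩

theorem isAsimD2_typeLE_possLE (Θ : Set ℕ) (hN : CountablySaturated N)
    (hP : CountablySaturated P) {t : N.U} {u : P.U} (htu : TypeLE N P t u) :
    IsAsimD2 false Θ N P t u (TypeLE N P) (TypeLE P N) (PossLE N P) (PossLE P N) :=
  ⟨htu, baseCondE_typeLE Θ, baseCondE_typeLE Θ, stepCondE_typeLE hN, stepCondE_typeLE hP,
    ⟨box2CondE_typeLE hN, box2CondE_typeLE hP⟩, diam2aCondE_typeLE hN, diam2aCondE_typeLE hP,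
    diam2bCondE_possLE hP, diam2bCondE_possLE hN⟩

end Asimulation

/-! ### Dependence of satisfaction on the free variables -/

theorem eqOn_update_of_eqOn_sdiff {ι U : Type*} [DecidableEq ι] {α β : ι → U} {s : Finset ι}
    {v : ι} (h : Set.EqOn α β ↑(s \ {v})) (u : U) :
    Set.EqOn (Function.update α v u) (Function.update β v u) s := by
  intro w hw
  by_cases hwv : w = v
  · simp [hwv]
  · simpa [hwv] using h (by simp_all : w ∈ (↑(s \ {v}) : Set ι))

theorem sat_congr_of_eqOn {M : Model} {φ : FOForm} {α β : ℕ → M.U}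
    (h : Set.EqOn α β φ.freeVars) : Sat M φ α ↔ Sat M φ β := by
  induction φ generalizing α β with
  | falsum => rfl
  | pred n v => simp [Sat, h (by simp [FOForm.freeVars] : v ∈ _)]
  | rel s v w => simp_all [Sat, FOForm.freeVars, Set.EqOn]
  | conj f g hf hg | disj f g hf hg | impl f g hf hg =>
    simp only [FOForm.freeVars, Finset.coe_union, Set.eqOn_union] at h
    simp only [Sat, hf h.1, hg h.2]
  | all v f hf => exact forall_congr' fun u => hf (eqOn_update_of_eqOn_sdiff h u)
  | ex v f hf => exact exists_congr fun u => hf (eqOn_update_of_eqOn_sdiff h u)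

theorem satAt_iff_sat {M : Model} {φ : FOForm} {x : ℕ} (hφ : φ.freeVars ⊆ {x}) {α : ℕ → M.U} :
    SatAt M (α x) x φ ↔ Sat M φ α := by
  refine ⟨fun h => h α rfl, fun h β hβ => (sat_congr_of_eqOn fun v hv => ?_).1 h⟩
  rw [Finset.mem_singleton.1 (hφ hv), hβ]

theorem InvariantD2.sat_of_typeLE {φ : FOForm} {x : ℕ} (hφ : φ.freeVars ⊆ {x})
    (h : InvariantD2 false x φ) {M N : Model} (hM : CountablySaturated M)
    (hN : CountablySaturated N) {α : ℕ → M.U} {β : ℕ → N.U} (hαβ : TypeLE M N (α x) (β x))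
    (hα : Sat M φ α) : Sat N φ β :=
  (satAt_iff_sat hφ).1 <| h φ.predLetters subset_rfl M N (α x) (β x) _ _ _ _
    (isAsimD2_typeLE_possLE _ hM hN hαβ) (α x) (β x) hαβ ((satAt_iff_sat hφ).2 hα)

/-! ### Ultraproducts -/

section Ultraproduct

open Filter

/-- The ultraproduct of a family of models. Points are not identified modulo the ultrafilter,
which is harmless because the correspondence language has no identity. -/
def Model.ultraproduct {ι : Type} (𝓤 : Ultrafilter ι) (M : ι → Model) : Model where
  U := ∀ i, (M i).U
  rel a b := ∀ᶠ i in 𝓤, (M i).rel (a i) (b i)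
  relBox a b := ∀ᶠ i in 𝓤, (M i).relBox (a i) (b i)
  relDiam a b := ∀ᶠ i in 𝓤, (M i).relDiam (a i) (b i)
  pred n a := ∀ᶠ i in 𝓤, (M i).pred n (a i)

theorem eventually_forall_iff_forall_eventually {ι : Type*} {W : ι → Type*} [∀ i, Nonempty (W i)]
    {l : Filter ι} {P : ∀ i, W i → Prop} :
    (∀ᶠ i in l, ∀ w, P i w) ↔ ∀ f : ∀ i, W i, ∀ᶠ i in l, P i (f i) := by
  refine ⟨fun h f => h.mono fun i hi => hi (f i), fun h => ?_⟩
  have counterexample (i : ι) : ∃ w, P i w → ∀ w, P i w := by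
    by_cases hi : ∀ w, P i w
    · exact ⟨Classical.arbitrary _, fun _ => hi⟩
    · exact (not_forall.1 hi).imp fun w hw h => absurd h hw
  choose f hf using counterexample
  exact (h f).mono hf

section Los

variable {ι : Type} {𝓤 : Ultrafilter ι} {M : ι → Model}

theorem sat_ultraproduct_iff (φ : FOForm) (α : ℕ → (Model.ultraproduct 𝓤 M).U) :
    Sat (.ultraproduct 𝓤 M) φ α ↔ ∀ᶠ i in 𝓤, Sat (M i) φ (fun v => α v i) := by
  have eval_update (α : ℕ → (Model.ultraproduct 𝓤 M).U) (v : ℕ) (u : (Model.ultraproduct 𝓤 M).U)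
      (i : ι) : (fun w => Function.update α v u w i) = Function.update (α · i) v (u i) :=
    funext fun w => Function.apply_update (fun _ a => a i) α v u w
  have (i : ι) : Nonempty (M i).U := ⟨α 0 i⟩
  induction φ generalizing α with
  | falsum => simpa [Sat] using 𝓤.neBot.ne
  | pred n v => rfl
  | rel s v w => cases s <;> rfl
  | conj f g hf hg => simp only [Sat, hf, hg, eventually_and]
  | disj f g hf hg => simp only [Sat, hf, hg, Ultrafilter.eventually_or]
  | impl f g hf hg => simp only [Sat, hf, hg, Ultrafilter.eventually_imp]
  | all v f hf =>
    simp only [Sat, hf, eval_update]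
    exact (eventually_forall_iff_forall_eventually
      (P := fun i u => Sat (M i) f (Function.update (α · i) v u))).symm
  | ex v f hf =>
    simp only [Sat, hf, eval_update]
    exact (skolem (P := fun i u => Sat (M i) f (Function.update (α · i) v u))).symm

theorem forces_ultraproduct_iff (I : MForm) (a : (Model.ultraproduct 𝓤 M).U) :
    Forces (.ultraproduct 𝓤 M) a I ↔ ∀ᶠ i in 𝓤, Forces (M i) (a i) I := by
  simpa only [sat_ST_iff_forces] using sat_ultraproduct_iff (ST false false I 0) (fun _ => a)

end Los

theorem exists_tendsto_atTop_eventually {l : Filter ℕ} (hl : l ≤ atTop) {T : ℕ → ℕ → Prop}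
    (h : ∀ k, ∀ᶠ n in l, T k n) : ∃ f : ℕ → ℕ, Tendsto f l atTop ∧ ∀ᶠ n in l, T (f n) n := by
  classical
  let f (n : ℕ) : ℕ := Nat.findGreatest (T · n) n
  have hf (k : ℕ) : ∀ᶠ n in l, k ≤ f n ∧ T (f n) n := by
    filter_upwards [h k, hl (eventually_ge_atTop k)] with n hT hkn
    exact ⟨Nat.le_findGreatest hkn hT, Nat.findGreatest_spec (P := (T · n)) hkn hT⟩
  exact ⟨f, tendsto_atTop.2 fun k => (hf k).mono fun _ => And.left,
    (hf 0).mono fun _ => And.right⟩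

theorem countablySaturated_ultraproduct {𝓤 : Ultrafilter ℕ} (h𝓤 : (𝓤 : Filter ℕ) ≤ atTop)
    (M : ℕ → Model) : CountablySaturated (.ultraproduct 𝓤 M) := by
  classical
  intro V α Γ hΓ h
  rcases Γ.eq_empty_or_nonempty with rfl | hne
  · exact ⟨α, Set.eqOn_refl α V, by simp⟩
  obtain ⟨γ, rfl⟩ := hΓ.exists_eq_range hne
  have approx (k : ℕ) : ∃ β : ℕ → (Model.ultraproduct 𝓤 M).U, Set.EqOn β α V ∧
      ∀ j < k, Sat (.ultraproduct 𝓤 M) (γ j) β := by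
    obtain ⟨β, hβα, hβ⟩ := h ((Finset.range k).image γ) (by simp)
    exact ⟨β, hβα, fun j hj => hβ _ (Finset.mem_image_of_mem γ (Finset.mem_range.2 hj))⟩
  choose β hβα hβ using approx
  have sat_initial (k : ℕ) : ∀ᶠ n in 𝓤, ∀ j < k, Sat (M n) (γ j) (fun v => β k v n) :=
    (eventually_all_finite (Set.finite_Iio k)).2 fun j hj =>
      (sat_ultraproduct_iff (γ j) (β k)).1 (hβ k j hj)
  obtain ⟨f, hf, hsat⟩ := exists_tendsto_atTop_eventually h𝓤 sat_initial
  refine ⟨fun v n => β (f n) v n, fun v hv => funext fun n => congrFun (hβα (f n) hv) n, ?_⟩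
  rintro _ ⟨j, rfl⟩
  refine (sat_ultraproduct_iff (γ j) _).2 ?_
  filter_upwards [hsat, hf.eventually_gt_atTop j] with n hn hj
  exact hn j hj

end Ultraproduct

/-! ### Modal definability -/

open Filter in
theorem exists_finset_sat_of_forces {φ : FOForm} {x : ℕ}
    (h : ∀ {M N : Model}, CountablySaturated M → CountablySaturated N →
      ∀ {α : ℕ → M.U} {β : ℕ → N.U}, TypeLE M N (α x) (β x) → Sat M φ α → Sat N φ β) :
    ∃ F : Finset MForm, ∀ (M N : Model) (α : ℕ → M.U) (β : ℕ → N.U),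
      (∀ I ∈ F, Forces M (α x) I → Forces N (β x) I) → Sat M φ α → Sat N φ β := by
  classical
  by_contra! hF
  have : Nonempty MForm := ⟨.bot⟩
  obtain ⟨e, he⟩ := exists_surjective_nat MForm
  choose M N α β hαβ hα hβ using fun k => hF ((Finset.range k).image e)
  let a : ℕ → (Model.ultraproduct (hyperfilter ℕ) M).U := fun v n => α n v
  let b : ℕ → (Model.ultraproduct (hyperfilter ℕ) N).U := fun v n => β n v
  have hab : TypeLE (.ultraproduct _ M) (.ultraproduct _ N) (a x) (b x) := by
    intro I hI
    obtain ⟨i, rfl⟩ := he I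
    rw [forces_ultraproduct_iff] at hI ⊢
    filter_upwards [hI, Nat.hyperfilter_le_atTop (eventually_gt_atTop i)] with n hn hin
    exact hαβ n _ (Finset.mem_image_of_mem e (Finset.mem_range.2 hin)) hn
  have ha : Sat (.ultraproduct _ M) φ a := (sat_ultraproduct_iff φ a).2 (.of_forall hα)
  have hb : Sat (.ultraproduct _ N) φ b :=
    h (countablySaturated_ultraproduct Nat.hyperfilter_le_atTop M)
      (countablySaturated_ultraproduct Nat.hyperfilter_le_atTop N) hab ha
  obtain ⟨n, hn⟩ := ((sat_ultraproduct_iff φ b).1 hb).exists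
  exact hβ n hn

theorem exists_equiv_ST_of_finset {φ : FOForm} {x : ℕ} (F : Finset MForm)
    (h : ∀ (M N : Model) (α : ℕ → M.U) (β : ℕ → N.U),
      (∀ I ∈ F, Forces M (α x) I → Forces N (β x) I) → Sat M φ α → Sat N φ β) :
    ∃ I : MForm, Equiv φ (ST false false I x) := by
  classical
  let trace (M : Model) (a : M.U) : Finset MForm := {I ∈ F | Forces M a I}
  let realized : Finset (Finset MForm) :=
    {S ∈ F.powerset | ∃ (M : Model) (α : ℕ → M.U), Sat M φ α ∧ trace M (α x) = S}
  refine ⟨.bigDisj (realized.image .bigConj), fun N β => ?_⟩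
  have forces_iff : Forces N (β x) (.bigDisj (realized.image .bigConj)) ↔
      ∃ (M : Model) (α : ℕ → M.U), Sat M φ α ∧ ∀ I ∈ trace M (α x), Forces N (β x) I := by
    simp only [forces_bigDisj, Finset.exists_mem_image, forces_bigConj, realized,
      Finset.mem_filter, Finset.mem_powerset]
    constructor
    · rintro ⟨_, ⟨_, M, α, hα, rfl⟩, hβ⟩
      exact ⟨M, α, hα, hβ⟩
    · rintro ⟨M, α, hα, hβ⟩
      exact ⟨trace M (α x), ⟨Finset.filter_subset _ _, M, α, hα, rfl⟩, hβ⟩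
  rw [sat_ST_iff_forces, forces_iff]
  constructor
  · exact fun hβ => ⟨N, β, hβ, fun I hI => (Finset.mem_filter.1 hI).2⟩
  · rintro ⟨M, α, hα, hβ⟩
    exact h M N α β (fun I hI hMI => hβ I (Finset.mem_filter.2 ⟨hI, hMI⟩)) hα

/-- **Hard direction of Theorem 2, case (2,2).**  If φ(x) is invariant with
respect to (2,2)-modal asimulations, then φ(x) is logically equivalent to a
(2,2)-standard x-translation of a modal intuitionistic formula. -/
theorem statement_15 (φ : FOForm) (x : ℕ) (hfv : φ.freeVars ⊆ {x})
    (h : InvariantD2 false x φ) :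
    ∃ I : MForm, Equiv φ (ST false false I x) := by
  obtain ⟨F, hF⟩ := exists_finset_sat_of_forces fun hM hN => h.sat_of_typeLE hfv hM hN
  exact exists_equiv_ST_of_finset F hF

end ModalIntAsim
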